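/- arXiv:2304.00866 — 5 statements merged into one kernel-verified Lean document; each statement's English description precedes it below -/
import Mathlib

section
/- For all k₁, k₂, x, y ∈ ℝ: exp(−2πi(k₁x + k₂y)) · exp(−πy²) · exp(2πik₁k₂) · θ[k₁; −k₂](x + iy, i) = exp(2πik₁k₂ − πk₂²) · θ[−x; y](k₁ + ik₂, i). In other words, the cell-periodic part of the lowest Landau level Bloch wave in the Landau gauge, written as a theta function with the quasimomentum (k₁,k₂) in the characteristics and the position x+iy in the argument, equals the theta function with the position (x,y) in the characteristics and the complexified quasimomentum k₁+ik₂ in the argument. -/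
/-!
Expanding the square `(n + a) ^ 2` writes each theta function with characteristics as an
exponential factor times a value of `jacobiTheta₂` (`thetaChar_eq`). The two arguments of `jacobiTheta₂` are
`u = (x - k₂) + I (y + k₁)` and `u / I`, so the modular transformation `τ ↦ -1 / τ`, which fixes
`I`, relates the two sides (`jacobiTheta₂_I`). What remains is an identity between exponents.
-/

open Complex Real

/-- The theta function with characteristics `a, b ∈ ℝ`:
`θ[a;b](w,τ) = ∑_{n∈ℤ} exp(iπτ(n+a)² + 2πi(n+a)(w+b))`. -/
noncomputable def thetaChar (a b : ℝ) (w τ : ℂ) : ℂ :=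
  ∑' n : ℤ, Complex.exp (Real.pi * Complex.I * τ * ((n : ℂ) + a) ^ 2 +
    2 * Real.pi * Complex.I * ((n : ℂ) + a) * (w + b))

theorem thetaChar_eq (a b : ℝ) (w τ : ℂ) :
    thetaChar a b w τ =
      Complex.exp (Real.pi * Complex.I * τ * (a : ℂ) ^ 2 +
        2 * Real.pi * Complex.I * a * (w + b)) * jacobiTheta₂ (a * τ + w + b) τ := by
  rw [thetaChar, jacobiTheta₂, ← tsum_mul_left]
  refine tsum_congr fun n => ?_
  rw [jacobiTheta₂_term, ← Complex.exp_add]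
  ring_nf

/-- The functional equation of `jacobiTheta₂` at the fixed point `I` of `τ ↦ -1 / τ`. -/
theorem jacobiTheta₂_I (u : ℂ) :
    jacobiTheta₂ u Complex.I =
      Complex.exp (-Real.pi * u ^ 2) * jacobiTheta₂ (-Complex.I * u) Complex.I := by
  have h1 : -Complex.I * Complex.I = 1 := by simp
  have h2 : -1 / Complex.I = Complex.I := by simp [neg_div]
  have h3 : u / Complex.I = -Complex.I * u := by simp [div_eq_mul_inv, mul_comm]
  have h4 : -Real.pi * Complex.I * u ^ 2 / Complex.I = -Real.pi * u ^ 2 := by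
    field_simp [Complex.I_ne_zero]
  rw [jacobiTheta₂_functional_equation u Complex.I, h1, h2, h3, h4]
  simp

/-- The cell-periodic part of the lowest Landau level Bloch wave,
written with the quasimomentum in the characteristics and the position in the
argument, equals the theta function with the position in the characteristics and
the complexified quasimomentum in the argument. -/
theorem lowest_landau_level_cell_periodic_part (k₁ k₂ x y : ℝ) :
    Complex.exp (-2 * Real.pi * Complex.I * ((k₁ : ℂ) * x + (k₂ : ℂ) * y)) *
        Complex.exp (-Real.pi * (y : ℂ) ^ 2) *
        Complex.exp (2 * Real.pi * Complex.I * k₁ * k₂) *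
        thetaChar k₁ (-k₂) ((x : ℂ) + Complex.I * y) Complex.I =
      Complex.exp (2 * Real.pi * Complex.I * k₁ * k₂ - Real.pi * (k₂ : ℂ) ^ 2) *
        thetaChar (-x) y ((k₁ : ℂ) + Complex.I * k₂) Complex.I := by
  rw [thetaChar_eq, thetaChar_eq, jacobiTheta₂_I (_ + _ + _)]
  have harg : -Complex.I * ((k₁ : ℂ) * Complex.I + (x + Complex.I * y) + ((-k₂ : ℝ) : ℂ)) =
      ((-x : ℝ) : ℂ) * Complex.I + (k₁ + Complex.I * k₂) + y := by
    push_cast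
    linear_combination (-(k₁ : ℂ) - y) * Complex.I_sq
  rw [harg]
  simp only [← mul_assoc, ← Complex.exp_add]
  congr 2
  push_cast
  ring_nf
  simp only [Complex.I_sq]
  ring
end

section
/- Let φ : ℂ → ℂ be an entire (complex differentiable) function and define ψ : ℝ² → ℂ by ψ(x,y) := exp(−πy²)·φ(x + iy). Then ψ is an eigenfunction of the Landau Hamiltonian with eigenvalue π: −(1/2)·[ (∂ₓ + 2πiy)((∂ₓ + 2πiy)ψ) + ∂_y(∂_yψ) ](x,y) = π·ψ(x,y) for all (x,y) ∈ ℝ². -/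
open Complex Real

/-- The covariant derivative `∇ₓψ = ∂ₓψ + 2πi y ψ` in the gauge `A = 2πi y dx`. -/
noncomputable def covDx (ψ : ℝ × ℝ → ℂ) : ℝ × ℝ → ℂ :=
  fun p => fderiv ℝ ψ p (1, 0) + 2 * Real.pi * Complex.I * p.2 * ψ p

/-- The covariant derivative `∇_yψ = ∂_yψ`. -/
noncomputable def covDy (ψ : ℝ × ℝ → ℂ) : ℝ × ℝ → ℂ :=
  fun p => fderiv ℝ ψ p (0, 1)

/-!
The map `L φ (x, y) = exp(-πy²) φ(x + iy)` satisfies, for `φ` entire, `∂ₓ(L φ) = L φ'` and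
`∂_y(L φ) = i L φ' - 2πy L φ` (Cauchy–Riemann). Hence `∇ₓ(L φ) = L φ' + 2πiy L φ =: χ` and
`∇_y(L φ) = i χ`: the annihilation operator `∇_y - i∇ₓ` kills `L φ`. Since `φ'` is again entire,
the same two formulas and the product rule give the derivatives of `χ`, namely
`∇ₓχ + i ∇_yχ = -2π L φ`, which is the commutator term coming from the field strength.
-/

/-- The lowest Landau level wave function `exp(-πy²) φ(x + iy)` attached to `φ`. -/
noncomputable def lll (φ : ℂ → ℂ) : ℝ × ℝ → ℂ :=
  fun p => Complex.exp (-Real.pi * p.2 ^ 2) * φ ((p.1 : ℂ) + Complex.I * p.2)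

theorem hasFDerivAt_snd_ofReal (p : ℝ × ℝ) :
    HasFDerivAt (fun q : ℝ × ℝ => (q.2 : ℂ))
      (Complex.ofRealCLM.comp (ContinuousLinearMap.snd ℝ ℝ ℝ)) p :=
  (Complex.ofRealCLM.comp (ContinuousLinearMap.snd ℝ ℝ ℝ)).hasFDerivAt

theorem hasFDerivAt_fst_ofReal (p : ℝ × ℝ) :
    HasFDerivAt (fun q : ℝ × ℝ => (q.1 : ℂ))
      (Complex.ofRealCLM.comp (ContinuousLinearMap.fst ℝ ℝ ℝ)) p :=
  (Complex.ofRealCLM.comp (ContinuousLinearMap.fst ℝ ℝ ℝ)).hasFDerivAt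

/-- The gradient of `lll φ`; its second component encodes the Cauchy–Riemann equations. -/
theorem lll_fderiv {φ : ℂ → ℂ} (hφ : Differentiable ℂ φ) (p : ℝ × ℝ) :
    DifferentiableAt ℝ (lll φ) p ∧ fderiv ℝ (lll φ) p (1, 0) = lll (deriv φ) p ∧
      fderiv ℝ (lll φ) p (0, 1)
        = Complex.I * lll (deriv φ) p - 2 * Real.pi * p.2 * lll φ p := by
  have hy := hasFDerivAt_snd_ofReal p
  have hz := (hasFDerivAt_fst_ofReal p).add (hy.const_mul Complex.I)
  have hφz := (hφ ((p.1 : ℂ) + Complex.I * p.2)).hasDerivAt.comp_hasFDerivAt_of_eq p hz rfl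
  have hexp := ((hy.pow 2).const_mul (-(Real.pi : ℂ))).cexp
  have h : HasFDerivAt (lll φ) _ p := hexp.mul hφz
  refine ⟨h.differentiableAt, ?_, ?_⟩
  · rw [h.fderiv]
    simp [lll]
  · rw [h.fderiv]
    simp [lll]
    ring

theorem covDx_lll {φ : ℂ → ℂ} (hφ : Differentiable ℂ φ) :
    covDx (lll φ) = fun p => lll (deriv φ) p + 2 * Real.pi * Complex.I * (p.2 * lll φ p) := by
  funext p
  rw [covDx, (lll_fderiv hφ p).2.1]
  ring

/-- The annihilation operator `∇_y - i∇ₓ` vanishes on the lowest Landau level. -/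
theorem covDy_lll {φ : ℂ → ℂ} (hφ : Differentiable ℂ φ) :
    covDy (lll φ) = fun p => Complex.I * covDx (lll φ) p := by
  funext p
  rw [covDy, (lll_fderiv hφ p).2.2, covDx_lll hφ]
  linear_combination (-2 * Real.pi * p.2 * lll φ p) * Complex.I_sq

/-- For `φ` entire, `ψ(x,y) = exp(−πy²) φ(x+iy)` is an eigenfunction
of the Landau Hamiltonian `H = −(1/2)[(∂ₓ + 2πiy)² + ∂_y²]` with eigenvalue `π`. -/
theorem lowest_landau_level_eigenfunction
    (φ : ℂ → ℂ) (hφ : Differentiable ℂ φ)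
    (ψ : ℝ × ℝ → ℂ)
    (hψ : ∀ p : ℝ × ℝ,
      ψ p = Complex.exp (-Real.pi * p.2 ^ 2) * φ ((p.1 : ℂ) + Complex.I * p.2)) :
    ∀ p : ℝ × ℝ,
      -(1 / 2 : ℂ) * (covDx (covDx ψ) p + covDy (covDy ψ) p) = Real.pi * ψ p := by
  intro p
  obtain rfl : ψ = lll φ := funext hψ
  have hφ' : Differentiable ℂ (deriv φ) := hφ.deriv
  obtain ⟨hd, hx, hy⟩ := lll_fderiv hφ p
  obtain ⟨hd', hx', hy'⟩ := lll_fderiv hφ' p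
  have hsum := hd'.hasFDerivAt.add
    (((hasFDerivAt_snd_ofReal p).mul hd.hasFDerivAt).const_mul (2 * Real.pi * Complex.I))
  have hχ := hsum.congr_of_eventuallyEq (Filter.EventuallyEq.of_eq (covDx_lll hφ))
  have h1 : covDx (covDx (lll φ)) p = lll (deriv (deriv φ)) p
      + 4 * Real.pi * Complex.I * p.2 * lll (deriv φ) p
      + (2 * Real.pi * Complex.I * p.2) ^ 2 * lll φ p := by
    rw [covDx, hχ.fderiv, covDx_lll hφ]
    simp [hx, hx']
    ring
  have h2 : covDy (covDy (lll φ)) p = Complex.I * (Complex.I * lll (deriv (deriv φ)) p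
      - 2 * Real.pi * p.2 * lll (deriv φ) p + 2 * Real.pi * Complex.I * (lll φ p
      + p.2 * (Complex.I * lll (deriv φ) p - 2 * Real.pi * p.2 * lll φ p))) := by
    rw [covDy_lll hφ, covDy, (hχ.const_mul Complex.I).fderiv]
    simp [hy, hy']
    ring
  rw [h1, h2]
  ring_nf
  simp only [Complex.I_sq, Complex.I_pow_three]
  ring
end

section
/- Fix k₁, k₂ ∈ ℝ. Suppose φ : ℂ → ℂ is entire and satisfies, for all w ∈ ℂ, the two quasiperiodicity conditions φ(w + 1) = exp(2πik₁)·φ(w) and φ(w + i) = exp(π − 2πi·w)·exp(2πik₂)·φ(w). Then there exists c ∈ ℂ such that φ(w) = c · ∑_{l∈ℤ} exp(−π(l + k₁)² + 2πi(l + k₁)·w − 2πi·l·k₂) for all w ∈ ℂ. In particular, the space of such entire functions is one-dimensional. -/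
open Complex Real

/-!
Write `φ w = exp (2πi k₁ w) f w`, so that `f` is entire with period `1`. The second quasiperiodicity
condition becomes `f (w + i) = A exp (-2πi w) f w` for a constant `A`.

Let `c n` be the Fourier coefficients of `f` on the real axis. By Cauchy's theorem on the unit
square, the integral over `[0, 1]` of a `1`-periodic entire function is unchanged if the path is
moved up by `i` (`integral_add_I_eq`). Applied to `exp (-2πi n w) f w`, this gives the two-sided
recursion `c n = exp (2πn) A c (n + 1)`, so that all the coefficients are determined by `c 0`. The
solution is `c 0` times the Gaussian sequence `jacobiTheta₂_term n (k₁ i - k₂) i`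
(`coeff_eq_theta_term`). This sequence is summable, so `f` equals its Fourier series on the real
axis, where it is therefore `c 0` times a Jacobi theta function; by the identity theorem the
equality holds on all of `ℂ`.
-/

/-- The integral of a `1`-periodic entire function along `[0, 1]` equals its integral along
`[i, 1 + i]`: in Cauchy's theorem for the unit square the vertical sides cancel by periodicity. -/
theorem integral_add_I_eq {h : ℂ → ℂ} (hh : Differentiable ℂ h) (hp : ∀ w, h (w + 1) = h w) :
    ∫ x : ℝ in (0 : ℝ)..1, h (x + I) = ∫ x : ℝ in (0 : ℝ)..1, h x := by
  have key := Complex.integral_boundary_rect_eq_zero_of_differentiableOn h 0 (1 + I)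
    hh.differentiableOn
  have hv : ∀ y : ℝ, h (1 + (y : ℂ) * I) = h ((y : ℂ) * I) := fun y => by
    rw [add_comm, hp]
  simp only [zero_re, zero_im, add_re, add_im, one_re, one_im, I_re, I_im, add_zero, zero_add,
    ofReal_zero, ofReal_one, zero_mul, one_mul, hv] at key
  linear_combination -key

/-- The `n`-th Fourier coefficient of the restriction of `f` to the interval `[0, 1]` of the real
axis. -/
noncomputable def blochCoeff (f : ℂ → ℂ) (n : ℤ) : ℂ :=
  ∫ x : ℝ in (0 : ℝ)..1, cexp (-(2 * π * I * n * x)) * f x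

/-- A continuous `1`-periodic function with summable Fourier coefficients is the sum of its
Fourier series on the real axis. -/
theorem hasSum_blochCoeff {f : ℂ → ℂ} (hf : Continuous f) (hp : ∀ w, f (w + 1) = f w)
    (hs : Summable (blochCoeff f)) (x : ℝ) :
    HasSum (fun n : ℤ => blochCoeff f n * cexp (2 * π * I * n * x)) (f x) := by
  have hper : Function.Periodic (fun x : ℝ => f x) 1 := fun x => by
    simpa using hp x
  have hcont : Continuous (hper.lift : AddCircle (1 : ℝ) → ℂ) :=
    continuous_coinduced_dom.mpr (hf.comp continuous_ofReal)
  let F : C(AddCircle (1 : ℝ), ℂ) := ⟨hper.lift, hcont⟩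
  have hF : ∀ y : ℝ, F (y : AddCircle (1 : ℝ)) = f y := fun y => hper.lift_coe y
  have hc : fourierCoeff F = blochCoeff f := by
    funext n
    rw [fourierCoeff_eq_intervalIntegral _ _ 0, blochCoeff]
    simp only [fourier_coe_apply, hF, zero_add, smul_eq_mul]
    simp
  have := has_pointwise_sum_fourier_series_of_summable (f := F) (by rwa [hc]) (x : AddCircle (1 : ℝ))
  rw [hF, hc] at this
  simpa only [fourier_coe_apply, smul_eq_mul, ofReal_one, div_one] using this

/-- Solution of the recursion between Fourier coefficients that quasiperiodicity in the direction
`i` forces, in terms of the coefficient of index `0`. -/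
theorem coeff_eq_theta_term (k₁ k₂ : ℝ) {f : ℂ → ℂ} (hf : Differentiable ℂ f)
    (hp : ∀ w, f (w + 1) = f w)
    (hq : ∀ w, f (w + I) = cexp (2 * π * k₁ + π + 2 * π * I * k₂ - 2 * π * I * w) * f w)
    (n : ℤ) : blochCoeff f n = blochCoeff f 0 * jacobiTheta₂_term n (k₁ * I - k₂) I := by
  have rec1 : ∀ n : ℤ, blochCoeff f n =
      cexp (2 * π * n + 2 * π * k₁ + π + 2 * π * I * k₂) * blochCoeff f (n + 1) := by
    intro n
    unfold blochCoeff
    rw [← integral_add_I_eq (h := fun w => cexp (-(2 * π * I * n * w)) * f w) (by fun_prop),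
      ← intervalIntegral.integral_const_mul]
    · congr 1
      funext x
      rw [hq, ← mul_assoc, ← mul_assoc, ← Complex.exp_add, ← Complex.exp_add]
      congr 2
      push_cast
      linear_combination (-2 * π * n : ℂ) * I_sq
    · intro w
      simp only [hp]
      congr 1
      refine Complex.exp_eq_exp_iff_exists_int.mpr ⟨-n, ?_⟩
      push_cast
      ring
  have rec2 : ∀ n : ℤ, jacobiTheta₂_term n (k₁ * I - k₂) I =
      cexp (2 * π * n + 2 * π * k₁ + π + 2 * π * I * k₂) *
        jacobiTheta₂_term (n + 1) (k₁ * I - k₂) I := by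
    intro n
    unfold jacobiTheta₂_term
    rw [← Complex.exp_add]
    congr 1
    push_cast
    linear_combination (-(2 * π * k₁ + 2 * π * n + π) : ℂ) * I_sq
  have step : ∀ n : ℤ, blochCoeff f n = blochCoeff f 0 * jacobiTheta₂_term n (k₁ * I - k₂) I ↔
      blochCoeff f (n + 1) = blochCoeff f 0 * jacobiTheta₂_term (n + 1) (k₁ * I - k₂) I := by
    intro n
    rw [rec1 n, rec2 n, mul_left_comm]
    exact mul_right_inj' (Complex.exp_ne_zero _)
  induction n using Int.induction_on with
  | zero => simp [jacobiTheta₂_term]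
  | succ n ih => exact (step n).mp ih
  | pred n ih => exact (step (-n - 1)).mpr (by simpa using ih)

/-- The periodic part of a Bloch wave is a multiple of a Jacobi theta function. -/
theorem eq_mul_jacobiTheta₂ (k₁ k₂ : ℝ) {f : ℂ → ℂ} (hf : Differentiable ℂ f)
    (hp : ∀ w, f (w + 1) = f w)
    (hq : ∀ w, f (w + I) = cexp (2 * π * k₁ + π + 2 * π * I * k₂ - 2 * π * I * w) * f w)
    (w : ℂ) : f w = blochCoeff f 0 * jacobiTheta₂ (w + (k₁ * I - k₂)) I := by
  have hI : 0 < I.im := by simp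
  have hc := coeff_eq_theta_term k₁ k₂ hf hp hq
  have hs : Summable (blochCoeff f) := by
    rw [funext hc]
    exact ((summable_jacobiTheta₂_term_iff _ _).mpr hI).mul_left _
  have hreal : ∀ x : ℝ, f x = blochCoeff f 0 * jacobiTheta₂ (x + (k₁ * I - k₂)) I := by
    intro x
    refine (hasSum_blochCoeff hf.continuous hp hs x).unique ?_
    convert! (hasSum_jacobiTheta₂_term (x + (k₁ * I - k₂)) hI).mul_left (blochCoeff f 0) using 1
    funext n
    rw [hc, mul_assoc]
    unfold jacobiTheta₂_term
    rw [← Complex.exp_add]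
    congr 2
    ring
  have hg : Differentiable ℂ fun w => blochCoeff f 0 * jacobiTheta₂ (w + (k₁ * I - k₂)) I :=
    fun w => ((differentiableAt_jacobiTheta₂_fst _ hI).comp w (by fun_prop)).const_mul _
  -- The real axis accumulates at `0`.
  have hfreq : ∃ᶠ z in nhdsWithin (0 : ℂ) {0}ᶜ,
      f z = blochCoeff f 0 * jacobiTheta₂ (z + (k₁ * I - k₂)) I := by
    have ht : Filter.Tendsto (fun x : ℝ => (x : ℂ)) (nhdsWithin 0 {0}ᶜ) (nhdsWithin 0 {0}ᶜ) := by
      refine tendsto_nhdsWithin_iff.mpr ⟨?_, ?_⟩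
      · exact (continuous_ofReal.tendsto' 0 0 ofReal_zero).mono_left nhdsWithin_le_nhds
      · filter_upwards [self_mem_nhdsWithin] with x hx
        simpa using hx
    exact ht.frequently (Filter.Eventually.of_forall hreal).frequently
  exact congrFun (AnalyticOnNhd.eq_of_frequently_eq (fun z _ => hf.analyticAt z)
    (fun z _ => hg.analyticAt z) hfreq) w

/-- Uniqueness of the lowest Landau level Bloch wave at fixed
quasimomentum `(k₁, k₂)`: an entire function satisfying
`φ(w+1) = exp(2πik₁) φ(w)` and `φ(w+i) = exp(π − 2πiw) exp(2πik₂) φ(w)`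
is a constant multiple of `∑_{l∈ℤ} exp(−π(l+k₁)² + 2πi(l+k₁)w − 2πi l k₂)`. -/
theorem lowest_landau_level_bloch_wave_unique
    (k₁ k₂ : ℝ) (φ : ℂ → ℂ) (hφ : Differentiable ℂ φ)
    (h1 : ∀ w : ℂ, φ (w + 1) = Complex.exp (2 * Real.pi * Complex.I * k₁) * φ w)
    (h2 : ∀ w : ℂ, φ (w + Complex.I) =
      Complex.exp ((Real.pi : ℂ) - 2 * Real.pi * Complex.I * w) *
        Complex.exp (2 * Real.pi * Complex.I * k₂) * φ w) :
    ∃ c : ℂ, ∀ w : ℂ,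
      φ w = c * ∑' l : ℤ,
        Complex.exp (-Real.pi * ((l : ℂ) + k₁) ^ 2 +
          2 * Real.pi * Complex.I * ((l : ℂ) + k₁) * w -
          2 * Real.pi * Complex.I * (l : ℂ) * k₂) := by
  have hf : Differentiable ℂ fun w => cexp (-(2 * π * I * k₁ * w)) * φ w := by fun_prop
  have hp : ∀ w : ℂ, cexp (-(2 * π * I * k₁ * (w + 1))) * φ (w + 1) =
      cexp (-(2 * π * I * k₁ * w)) * φ w := by
    intro w
    rw [h1, ← mul_assoc, ← Complex.exp_add]
    congr 2
    ring
  have hq : ∀ w : ℂ, cexp (-(2 * π * I * k₁ * (w + I))) * φ (w + I) =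
      cexp (2 * π * k₁ + π + 2 * π * I * k₂ - 2 * π * I * w) *
        (cexp (-(2 * π * I * k₁ * w)) * φ w) := by
    intro w
    rw [h2, ← mul_assoc, ← mul_assoc, ← mul_assoc, ← Complex.exp_add, ← Complex.exp_add,
      ← Complex.exp_add]
    congr 2
    linear_combination (-2 * π * k₁ : ℂ) * I_sq
  have main := eq_mul_jacobiTheta₂ k₁ k₂ hf hp hq
  set C := blochCoeff (fun w => cexp (-(2 * π * I * k₁ * w)) * φ w) 0
  -- Completing the square `(l + k₁)²` costs the constant factor `exp (π k₁²)`.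
  refine ⟨C * cexp (π * k₁ ^ 2), fun w => ?_⟩
  have hφw : φ w = cexp (2 * π * I * k₁ * w) * (cexp (-(2 * π * I * k₁ * w)) * φ w) := by
    rw [← mul_assoc, ← Complex.exp_add, add_neg_cancel, Complex.exp_zero, one_mul]
  rw [hφw, main w, jacobiTheta₂, mul_left_comm, mul_assoc C]
  congr 1
  rw [← tsum_mul_left, ← tsum_mul_left]
  congr 1
  funext l
  unfold jacobiTheta₂_term
  rw [← Complex.exp_add, ← Complex.exp_add]
  congr 1
  linear_combination (2 * π * l * k₁ + π * l ^ 2 : ℂ) * I_sq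
end

section
/- Let τ ∈ ℂ with Im τ > 0, let C be a positive integer, and let a, b ∈ ℝ. Then the set V of entire functions f : ℂ → ℂ satisfying f(z + 1) = exp(2πia)·f(z) and f(z + τ) = exp(−iπτC − 2πiC·z)·exp(2πib)·f(z) for all z ∈ ℂ is a complex vector subspace of the space of entire functions, and V has dimension exactly C over ℂ. -/
/-! The upper bound and the lower bound on the dimension are obtained separately.

*Upper bound.* For a section `f`, the function `exp(-2πiaz) f(z)` is entire and `1`-periodic; let
`cₙ(f)` be its Fourier coefficients. Moving the contour of the integral defining `cₙ(f)` from
`[0, 1]` to `τ + [0, 1]` and using the quasi-periodicity under `τ` shows that `cₙ(f)` is a nonzero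
multiple of `cₙ₊C(f)` (`thetaCoeff_recurrence`). So if `c₀(f), …, c_{C-1}(f)` vanish, then all
`cₙ(f)` do, `f` vanishes on the real line (`eq_zero_of_thetaCoeff_eq_zero`), and `f = 0` by the
identity theorem. Hence `f ↦ (c₀(f), …, c_{C-1}(f))` embeds the space of sections into `ℂ ^ C`.

*Lower bound.* For `0 ≤ k < C` the function
`exp(2πi(k+a)z) ϑ(Cz + (k+a)τ - b, Cτ)`, with `ϑ` the two-variable Jacobi theta function, is a
section. It is not zero, because the zeroth Fourier coefficient of `ϑ(·, τ)` is `1`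
(`integral_jacobiTheta₂`), and it is an eigenvector of the translation `z ↦ z + 1/C` with eigenvalue
`exp(2πi(k+a)/C)`. These `C` eigenvalues are distinct, so the `C` sections are linearly
independent. -/

open Complex Real

/-- The space of sections of the line bundle with multipliers `exp(2πia)` and
`exp(-iπτC - 2πiCz) exp(2πib)`, as a subspace of all functions `ℂ → ℂ`. -/
def thetaSections (τ : ℂ) (C : ℕ) (a b : ℝ) : Submodule ℂ (ℂ → ℂ) where
  carrier := {f : ℂ → ℂ | Differentiable ℂ f ∧
          (∀ z : ℂ, f (z + 1) = Complex.exp (2 * Real.pi * Complex.I * a) * f z) ∧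
          (∀ z : ℂ, f (z + τ) =
            Complex.exp (-Real.pi * Complex.I * τ * C -
                2 * Real.pi * Complex.I * C * z) *
              Complex.exp (2 * Real.pi * Complex.I * b) * f z)}
  add_mem' := by
    rintro f g ⟨hf, hf1, hf2⟩ ⟨hg, hg1, hg2⟩
    refine ⟨hf.add hg, fun z => ?_, fun z => ?_⟩
    · simp only [Pi.add_apply, hf1, hg1]; ring
    · simp only [Pi.add_apply, hf2, hg2]; ring
  zero_mem' := ⟨differentiable_const _, by simp, by simp⟩
  smul_mem' := by
    rintro c f ⟨hf, hf1, hf2⟩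
    refine ⟨hf.const_smul c, fun z => ?_, fun z => ?_⟩
    · simp only [Pi.smul_apply, smul_eq_mul, hf1]; ring
    · simp only [Pi.smul_apply, smul_eq_mul, hf2]; ring

/-! ### Fourier coefficients of sections and the upper bound -/

/-- The integral over a period of an entire `1`-periodic function does not change when the contour
is translated, by Cauchy's theorem on a rectangle. -/
lemma integral_translate_of_periodic {h : ℂ → ℂ} (hd : Differentiable ℂ h)
    (hp : ∀ z, h (z + 1) = h z) (w : ℂ) :
    ∫ x in (0 : ℝ)..1, h (x + w) = ∫ x in (0 : ℝ)..1, h x := by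
  have hrect := Complex.integral_boundary_rect_eq_zero_of_differentiableOn h 0 (1 + w.im * I)
    hd.differentiableOn
  have hside : ∀ y : ℝ, h (1 + y * I) = h (y * I) := fun y => by rw [add_comm, hp]
  simp [hside, sub_eq_zero] at hrect
  have hper : Function.Periodic (fun x : ℝ => h (x + w.im * I)) 1 := fun x => by
    have := hp (x + w.im * I)
    simp only [← this]
    congr 1
    push_cast
    ring
  have hshift := hper.intervalIntegral_add_eq w.re 0
  rw [zero_add, ← hrect] at hshift
  rw [hrect, ← hrect, ← hshift]
  have hsub := intervalIntegral.integral_comp_add_right (a := 0) (b := 1)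
    (fun x : ℝ => h (x + w.im * I)) w.re
  rw [zero_add, add_comm (1 : ℝ)] at hsub
  rw [← hsub]
  congr 1
  ext x
  congr 1
  push_cast
  rw [add_assoc, Complex.re_add_im]

/-- The `n`-th Fourier coefficient of `x ↦ exp(-2πiax) f(x)` on `[0, 1]`. -/
noncomputable def thetaCoeff (a : ℝ) (n : ℤ) (f : ℂ → ℂ) : ℂ :=
  ∫ x in (0 : ℝ)..1, cexp (-(2 * π * I * (n + a) * x)) * f x

lemma exp_mul_add_one (a : ℝ) (n : ℤ) (z : ℂ) :
    cexp (-(2 * π * I * (n + a) * (z + 1))) * cexp (2 * π * I * a) =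
      cexp (-(2 * π * I * (n + a) * z)) := by
  rw [← Complex.exp_add, Complex.exp_eq_exp_iff_exists_int]
  exact ⟨-n, by push_cast; ring⟩

/-- Up to a nonzero factor, the Fourier coefficients of a section depend only on the index
modulo `C`. -/
lemma thetaCoeff_recurrence {τ : ℂ} {C : ℕ} {a b : ℝ} {f : ℂ → ℂ}
    (hf : f ∈ thetaSections τ C a b) (n : ℤ) :
    thetaCoeff a n f =
      cexp (2 * π * I * b - π * I * τ * C - 2 * π * I * (n + a) * τ) *
        thetaCoeff a (n + C) f := by
  obtain ⟨hd, h1, h2⟩ := hf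
  have key := integral_translate_of_periodic
    (h := fun z => cexp (-(2 * π * I * (n + a) * z)) * f z) (by fun_prop)
    (fun z => by
      simp only [h1]
      rw [← mul_assoc, exp_mul_add_one]) τ
  simp only [thetaCoeff]
  rw [← key, ← intervalIntegral.integral_const_mul]
  congr 1
  ext x
  rw [h2]
  simp only [← mul_assoc, ← Complex.exp_add]
  congr 2
  push_cast
  ring

/-- An entire function with multiplier `exp(2πia)` under `z ↦ z + 1`, all of whose Fourier
coefficients vanish, is zero: it vanishes on the real line by uniqueness of Fourier series. -/
lemma eq_zero_of_thetaCoeff_eq_zero {a : ℝ} {f : ℂ → ℂ} (hd : Differentiable ℂ f)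
    (h1 : ∀ z : ℂ, f (z + 1) = cexp (2 * π * I * a) * f z)
    (h0 : ∀ n, thetaCoeff a n f = 0) : f = 0 := by
  set g : ℝ → ℂ := fun x => cexp (-(2 * π * I * a * x)) * f x with hg
  have hgp : Function.Periodic g 1 := fun x => by
    have := exp_mul_add_one a 0 x
    simp only [Int.cast_zero, zero_add] at this
    simp only [hg]
    push_cast
    rw [h1, ← mul_assoc, this]
  have hgc : Continuous g := by
    have := hd.continuous
    fun_prop
  let G : C(AddCircle (1 : ℝ), ℂ) := ⟨hgp.lift, continuous_coinduced_dom.mpr hgc⟩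
  have hcoeff : fourierCoeff G = 0 := by
    ext n
    rw [fourierCoeff_eq_intervalIntegral _ n 0]
    have := h0 n
    simp only [thetaCoeff] at this
    simp only [zero_add, div_one, one_smul, Pi.zero_apply]
    rw [← this]
    congr 1
    ext x
    have hGx : G (x : AddCircle (1 : ℝ)) = g x := rfl
    rw [hGx, fourier_coe_apply, smul_eq_mul, hg]
    simp only [← mul_assoc, ← Complex.exp_add]
    congr 2
    push_cast
    ring
  have hzero : ∀ x : ℝ, f x = 0 := fun x => by
    have hs := has_pointwise_sum_fourier_series_of_summable (f := G)
      (by rw [hcoeff]; exact summable_zero) (x : AddCircle (1 : ℝ))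
    simp only [hcoeff, Pi.zero_apply, zero_smul] at hs
    have hGx : g x = 0 := hs.unique hasSum_zero
    simpa [hg] using hGx
  have hfreq : ∃ᶠ z in nhdsWithin (0 : ℂ) {0}ᶜ, f z = (fun _ => (0 : ℂ)) z := by
    have ht : Filter.Tendsto (fun x : ℝ => (x : ℂ)) (nhdsWithin (0 : ℝ) {0}ᶜ)
        (nhdsWithin (0 : ℂ) {0}ᶜ) := by
      refine tendsto_nhdsWithin_iff.mpr ⟨?_, ?_⟩
      · exact (Complex.continuous_ofReal.tendsto' 0 0 (by simp)).mono_left nhdsWithin_le_nhds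
      · filter_upwards [self_mem_nhdsWithin] with x hx
        simpa using hx
    exact ht.frequently (Filter.Frequently.of_forall hzero)
  exact (hd.differentiableOn.analyticOnNhd isOpen_univ).eq_of_frequently_eq
    (fun z _ => analyticAt_const) hfreq

/-- The first `C` Fourier coefficients, as a linear map on the space of sections. -/
noncomputable def thetaCoeffMap (τ : ℂ) (C : ℕ) (a b : ℝ) :
    thetaSections τ C a b →ₗ[ℂ] (Fin C → ℂ) where
  toFun f k := thetaCoeff a (k : ℕ) f
  map_add' f g := by
    ext k
    have hf := f.2.1.continuous
    have hg := g.2.1.continuous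
    simp only [thetaCoeff, Submodule.coe_add, Pi.add_apply, mul_add]
    exact intervalIntegral.integral_add
      (Continuous.intervalIntegrable (by fun_prop) _ _)
      (Continuous.intervalIntegrable (by fun_prop) _ _)
  map_smul' c f := by
    ext k
    simp only [thetaCoeff, Submodule.coe_smul, Pi.smul_apply, smul_eq_mul, RingHom.id_apply]
    rw [← intervalIntegral.integral_const_mul]
    congr 1
    ext x
    ring

lemma thetaCoeffMap_injective (τ : ℂ) {C : ℕ} (hC : 0 < C) (a b : ℝ) :
    Function.Injective (thetaCoeffMap τ C a b) := by
  rw [injective_iff_map_eq_zero]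
  intro f hf
  have hsmall : ∀ k : ℕ, k < C → thetaCoeff a k f = 0 := fun k hk => congrFun hf ⟨k, hk⟩
  have hiff : ∀ n : ℤ, thetaCoeff a n f = 0 ↔ thetaCoeff a (n + C) f = 0 := fun n => by
    rw [thetaCoeff_recurrence f.2 n]
    simp
  -- Steps of size `C` in either direction connect every index to one in `[0, C)`.
  have hmul : ∀ (m n : ℤ), thetaCoeff a n f = 0 ↔ thetaCoeff a (n + m * C) f = 0 := by
    intro m n
    induction m using Int.induction_on with
    | zero => simp
    | succ i ih => rw [ih, hiff]; ring_nf
    | pred i ih => rw [ih, hiff (n + (-(i : ℤ) - 1) * C)]; ring_nf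
  refine Subtype.ext (eq_zero_of_thetaCoeff_eq_zero f.2.1 f.2.2.1 fun n => ?_)
  have hC' : (0 : ℤ) < C := by exact_mod_cast hC
  have hlt := Int.emod_lt_of_pos n hC'
  obtain ⟨k, hk⟩ := Int.eq_ofNat_of_zero_le (Int.emod_nonneg n hC'.ne')
  have := (hmul (n / C) (n % C)).mp (by rw [hk]; exact hsmall k (by omega))
  rwa [mul_comm, Int.emod_add_mul_ediv] at this

/-! ### Theta functions and the lower bound -/

/-- The zeroth Fourier coefficient of the theta series, integrated term by term. -/
lemma integral_jacobiTheta₂ {τ : ℂ} (hτ : 0 < τ.im) :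
    ∫ x in (0 : ℝ)..1, jacobiTheta₂ x τ = 1 := by
  have hterm : ∀ n : ℤ, ∫ x in (0 : ℝ)..1, jacobiTheta₂_term n x τ = if n = 0 then 1 else 0 := by
    intro n
    split_ifs with hn
    · simp [hn, jacobiTheta₂_term]
    · have hc : 2 * π * I * n ≠ 0 := by simp [hn, Real.pi_ne_zero]
      simp only [jacobiTheta₂_term, Complex.exp_add]
      rw [intervalIntegral.integral_mul_const, integral_exp_mul_complex hc]
      have : cexp (2 * π * I * n * (1 : ℝ)) = 1 :=
        Complex.exp_eq_one_iff.mpr ⟨n, by push_cast; ring⟩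
      rw [this]
      simp
  have hnorm : ∀ (n : ℤ) (x : ℝ), ‖jacobiTheta₂_term n x τ‖ = ‖jacobiTheta₂_term n 0 τ‖ := by
    intro n x
    simp [norm_jacobiTheta₂_term]
  have hs := intervalIntegral.hasSum_integral_of_dominated_convergence (a := 0) (b := 1)
    (μ := MeasureTheory.volume) (F := fun (n : ℤ) (x : ℝ) => jacobiTheta₂_term n x τ)
    (f := fun x : ℝ => jacobiTheta₂ x τ)
    (fun n _ => ‖jacobiTheta₂_term n 0 τ‖)
    (fun n => Continuous.aestronglyMeasurable (by unfold jacobiTheta₂_term; fun_prop))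
    (fun n => Filter.Eventually.of_forall fun x _ => (hnorm n x).le)
    (Filter.Eventually.of_forall fun x _ => ((summable_jacobiTheta₂_term_iff 0 τ).mpr hτ).norm)
    (by simp)
    (Filter.Eventually.of_forall fun x _ => hasSum_jacobiTheta₂_term x hτ)
  simp only [hterm] at hs
  exact hs.unique (hasSum_ite_eq 0 1)

lemma exists_jacobiTheta₂_ne_zero {τ : ℂ} (hτ : 0 < τ.im) : ∃ z, jacobiTheta₂ z τ ≠ 0 := by
  by_contra! h
  simpa [h] using integral_jacobiTheta₂ hτ

lemma jacobiTheta₂_add_natCast (z τ : ℂ) (m : ℕ) :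
    jacobiTheta₂ (z + m) τ = jacobiTheta₂ z τ := by
  induction m with
  | zero => simp
  | succ m ih => rw [Nat.cast_succ, ← add_assoc, jacobiTheta₂_add_left, ih]

/-- The section `exp(2πi(k+a)z) ϑ(Cz + (k+a)τ - b, Cτ)`; its nonzero Fourier coefficients are those
with index congruent to `k` modulo `C`. -/
noncomputable def thetaBasisFun (τ : ℂ) (C : ℕ) (a b : ℝ) (k : ℕ) (z : ℂ) : ℂ :=
  cexp (2 * π * I * (k + a) * z) * jacobiTheta₂ (C * z + ((k + a) * τ - b)) (C * τ)

section
variable {τ : ℂ} {C : ℕ} (a b : ℝ) (k : ℕ)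

lemma thetaBasisFun_mem (hτ : 0 < τ.im) (hC : 0 < C) :
    thetaBasisFun τ C a b k ∈ thetaSections τ C a b := by
  have hCτ : 0 < ((C : ℂ) * τ).im := by
    simpa using mul_pos (Nat.cast_pos.mpr hC) hτ
  refine ⟨fun z => ?_, fun z => ?_, fun z => ?_⟩
  · have := (differentiableAt_jacobiTheta₂_fst (C * z + ((k + a) * τ - b)) hCτ).comp z
      (f := fun z => C * z + ((k + a) * τ - b)) (by fun_prop)
    exact DifferentiableAt.mul (by fun_prop) this
  · simp only [thetaBasisFun]
    have harg : C * (z + 1) + ((k + a) * τ - b) = (C * z + ((k + a) * τ - b)) + (C : ℕ) := by ring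
    rw [harg, jacobiTheta₂_add_natCast, ← mul_assoc, ← Complex.exp_add]
    congr 1
    rw [Complex.exp_eq_exp_iff_exists_int]
    exact ⟨k, by push_cast; ring⟩
  · simp only [thetaBasisFun]
    have harg : C * (z + τ) + ((k + a) * τ - b) = (C * z + ((k + a) * τ - b)) + C * τ := by ring
    rw [harg, jacobiTheta₂_add_left']
    simp only [← mul_assoc, ← Complex.exp_add]
    congr 2
    ring

lemma thetaBasisFun_ne_zero (hτ : 0 < τ.im) (hC : 0 < C) : thetaBasisFun τ C a b k ≠ 0 := by
  have hCτ : 0 < ((C : ℂ) * τ).im := by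
    simpa using mul_pos (Nat.cast_pos.mpr hC) hτ
  obtain ⟨w, hw⟩ := exists_jacobiTheta₂_ne_zero hCτ
  have hC' : (C : ℂ) ≠ 0 := by exact_mod_cast hC.ne'
  intro h
  have := congrFun h ((w - ((k + a) * τ - b)) / C)
  simp only [thetaBasisFun, mul_div_cancel₀ _ hC', sub_add_cancel, Pi.zero_apply] at this
  exact (mul_ne_zero (Complex.exp_ne_zero _) hw) this

lemma thetaBasisFun_translate (hC : 0 < C) (z : ℂ) :
    thetaBasisFun τ C a b k (z + 1 / C) =
      cexp (2 * π * I * (k + a) / C) * thetaBasisFun τ C a b k z := by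
  have hC' : (C : ℂ) ≠ 0 := by exact_mod_cast hC.ne'
  simp only [thetaBasisFun]
  have harg : C * (z + 1 / C) + ((k + a) * τ - b) = (C * z + ((k + a) * τ - b)) + 1 := by
    field_simp
    ring
  rw [harg, jacobiTheta₂_add_left, ← mul_assoc, ← Complex.exp_add]
  congr 2
  ring

end

/-- The functions are eigenvectors of translation by `1 / C`, with distinct eigenvalues. -/
lemma linearIndependent_thetaBasisFun {τ : ℂ} (hτ : 0 < τ.im) {C : ℕ} (hC : 0 < C) (a b : ℝ) :
    LinearIndependent ℂ (fun k : Fin C => thetaBasisFun τ C a b k) := by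
  have hC' : (C : ℂ) ≠ 0 := by exact_mod_cast hC.ne'
  refine Module.End.eigenvectors_linearIndependent'
    (LinearMap.funLeft ℂ ℂ (fun z : ℂ => z + 1 / C))
    (fun k : Fin C => cexp (2 * π * I * ((k : ℕ) + a) / C)) ?_ _ fun k => ?_
  · intro j k hjk
    obtain ⟨n, hn⟩ := Complex.exp_eq_exp_iff_exists_int.mp hjk
    have h2 : (2 * π * I : ℂ) ≠ 0 := Complex.two_pi_I_ne_zero
    have hcast : ((j : ℕ) : ℂ) = (k : ℕ) + n * C := by
      field_simp at hn
      linear_combination hn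
    have hint : ((j : ℕ) : ℤ) = (k : ℕ) + n * C := by exact_mod_cast hcast
    have hmod : (j : ℕ) % C = (k : ℕ) % C := by
      have := congrArg (· % (C : ℤ)) hint
      simp only [Int.add_mul_emod_self_right] at this
      exact_mod_cast this
    rw [Nat.mod_eq_of_lt j.2, Nat.mod_eq_of_lt k.2] at hmod
    exact Fin.ext hmod
  · refine Module.End.hasEigenvector_iff.mpr ⟨Module.End.mem_eigenspace_iff.mpr ?_,
      thetaBasisFun_ne_zero a b k hτ hC⟩
    ext z
    exact thetaBasisFun_translate a b k hC z

/-- The set of entire functions `f` satisfying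
`f(z+1) = exp(2πia) f(z)` and `f(z+τ) = exp(−iπτC − 2πiCz) exp(2πib) f(z)` is a
complex vector subspace of the space of all functions `ℂ → ℂ` (consisting of entire
functions), of dimension exactly `C` (Riemann–Roch for a degree-`C` line bundle
over the torus `ℂ/(ℤ + τℤ)`). -/
theorem theta_sections_dimension
    (τ : ℂ) (hτ : 0 < τ.im) (C : ℕ) (hC : 0 < C) (a b : ℝ) :
    ∃ W : Submodule ℂ (ℂ → ℂ),
      (W : Set (ℂ → ℂ)) =
        {f : ℂ → ℂ | Differentiable ℂ f ∧
          (∀ z : ℂ, f (z + 1) = Complex.exp (2 * Real.pi * Complex.I * a) * f z) ∧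
          (∀ z : ℂ, f (z + τ) =
            Complex.exp (-Real.pi * Complex.I * τ * C -
                2 * Real.pi * Complex.I * C * z) *
              Complex.exp (2 * Real.pi * Complex.I * b) * f z)} ∧
      Module.finrank ℂ W = C := by
  refine ⟨thetaSections τ C a b, rfl, le_antisymm ?_ ?_⟩
  · simpa using LinearMap.finrank_le_finrank_of_injective (thetaCoeffMap_injective τ hC a b)
  · have : Module.Finite ℂ (thetaSections τ C a b) :=
      Module.Finite.of_injective _ (thetaCoeffMap_injective τ hC a b)
    have hli : LinearIndependent ℂ (fun k : Fin C =>
        (⟨thetaBasisFun τ C a b k, thetaBasisFun_mem a b k hτ hC⟩ : thetaSections τ C a b)) :=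
      LinearIndependent.of_comp (thetaSections τ C a b).subtype
        (linearIndependent_thetaBasisFun hτ hC a b)
    simpa using hli.fintype_card_le_finrank
end

section
/- Let C be a positive integer and let f, g : ℝ → ℂ be continuous compactly supported functions. For α ∈ {0, 1, …, C−1} define the Bloch–Zak components f_α, g_α : ℝ² → ℂ by f_α(x, y) := ∑_{m∈ℤ} f((−x + α)/C + m) · exp(2πi·(y/C)·(−x + α + C·m)), and similarly for g_α. Then (1/C) · ∑_{α=0}^{C−1} ∫₀¹∫₀¹ conj(f_α(x,y)) · g_α(x,y) dx dy = ∫_ℝ conj(f(q)) · g(q) dq. -/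
/-!
For fixed `α` and `x`, the functions `y ↦ F α x y`, `y ↦ G α x y` are, up to a common unimodular
phase, trigonometric polynomials with coefficients `f (a + m)`, `g (a + m)`, where
`a = (-x + α) / C`. Orthogonality of the characters `exp (2πi n y)` on `[0, 1]` reduces the integral
over `y` to `∑ m, conj (f (a + m)) * g (a + m)`. The intervals swept out by `a + m`, as `x` runs
over `[0, 1]`, `α` over `0, …, C - 1` and `m` over `ℤ`, tile the line, and the substitution
`q = (-x + α) / C + m` produces the factor `C` which cancels `1 / C`. Since `a` stays in `[-1, 1]`
and `f`, `g` have compact support, all sums run over one fixed finite set of integers.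
-/

open Complex Real MeasureTheory

/-- Orthogonality of the characters of `ℝ / ℤ`. -/
lemma integral_exp_int (n : ℤ) :
    ∫ y in (0 : ℝ)..1, Complex.exp (2 * Real.pi * Complex.I * n * y) =
      if n = 0 then 1 else 0 := by
  split_ifs with h
  · simp [h]
  · have hc : (2 * Real.pi * Complex.I * n : ℂ) ≠ 0 := by
      simp [h, Real.pi_ne_zero]
    rw [integral_exp_mul_complex hc]
    have : Complex.exp (2 * Real.pi * Complex.I * n) = 1 := by
      rw [← Complex.exp_int_mul_two_pi_mul_I n]; congr 1; ring
    simp [this]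

/-- Parseval's identity for two trigonometric polynomials multiplied by a common phase of
frequency `b / C`. -/
lemma integral_conj_mul_trig (C : ℕ) (hC : 0 < C) (b : ℝ) (S : Finset ℤ) (u v : ℤ → ℂ) :
    ∫ y in (0 : ℝ)..1,
      (starRingEnd ℂ) (∑ m ∈ S, u m *
        Complex.exp (2 * Real.pi * Complex.I * (y / C) * (b + C * m))) *
      (∑ m ∈ S, v m * Complex.exp (2 * Real.pi * Complex.I * (y / C) * (b + C * m))) =
    ∑ m ∈ S, (starRingEnd ℂ) (u m) * v m := by
  have hC' : (C : ℂ) ≠ 0 := by exact_mod_cast hC.ne'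
  have key : ∀ y : ℝ,
      (starRingEnd ℂ) (∑ m ∈ S, u m *
        Complex.exp (2 * Real.pi * Complex.I * (y / C) * (b + C * m))) *
      (∑ m ∈ S, v m * Complex.exp (2 * Real.pi * Complex.I * (y / C) * (b + C * m))) =
      ∑ m ∈ S, ∑ k ∈ S, (starRingEnd ℂ) (u m) * v k *
        Complex.exp (2 * Real.pi * Complex.I * ((k - m : ℤ) : ℂ) * y) := by
    intro y
    rw [map_sum, Finset.sum_mul_sum]
    refine Finset.sum_congr rfl fun m _ => Finset.sum_congr rfl fun k _ => ?_
    rw [map_mul, ← Complex.exp_conj, mul_mul_mul_comm, ← Complex.exp_add]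
    congr 2
    simp only [map_mul, map_add, map_div₀, Complex.conj_ofReal, Complex.conj_I, map_ofNat,
      map_natCast, map_intCast]
    push_cast
    field_simp
    ring
  simp_rw [key]
  rw [intervalIntegral.integral_finsetSum
    (fun m _ => Continuous.intervalIntegrable (by fun_prop) _ _)]
  refine Finset.sum_congr rfl fun m hm => ?_
  rw [intervalIntegral.integral_finsetSum
    (fun m _ => Continuous.intervalIntegrable (by fun_prop) _ _)]
  simp_rw [intervalIntegral.integral_const_mul, integral_exp_int, sub_eq_zero]
  simp [hm]

/-- The translates of `[-1, 1]` by all but finitely many integers miss a given compact support. -/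
lemma exists_forall_add_int_eq_zero (f : ℝ → ℂ) (hf : HasCompactSupport f) :
    ∃ S : Finset ℤ, ∀ a : ℝ, |a| ≤ 1 → ∀ m ∉ S, f (a + m) = 0 := by
  obtain ⟨R, hR⟩ := hf.isCompact.isBounded.exists_norm_le
  obtain ⟨N, hN⟩ := exists_nat_gt R
  refine ⟨Finset.Icc (-(N + 1 : ℤ)) (N + 1), fun a ha m hm => ?_⟩
  by_contra h
  have h1 := hR _ (subset_tsupport f h)
  rw [Real.norm_eq_abs, abs_le] at h1
  rw [abs_le] at ha
  apply hm
  rw [Finset.mem_Icc]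
  have h2 : (m : ℝ) < N + 2 := by linarith
  have h3 : (-(N + 2) : ℝ) < m := by linarith
  have h2' : m < N + 2 := by exact_mod_cast h2
  have h3' : -((N : ℤ) + 2) < m := by exact_mod_cast h3
  omega

/-- The substitution `q = (-x + α) / C + m`, summed over `α`, covers one period. -/
lemma sum_integral_comp (C : ℕ) (hC : 0 < C) (h : ℝ → ℂ) (hh : Continuous h) (m : ℤ) :
    ∑ α ∈ Finset.range C, ∫ x in (0 : ℝ)..1, h ((-x + α) / C + m) =
      C * ∫ q in (-1 / C + m : ℝ)..(-1 / C + (m + 1)), h q := by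
  have hC' : (C : ℝ) ≠ 0 := by exact_mod_cast hC.ne'
  let p : ℕ → ℝ := fun α => -1 / C + m + α / C
  have h1 : ∀ α : ℕ, ∫ x in (0 : ℝ)..1, h ((-x + α) / C + m) =
      C * ∫ q in p α..p (α + 1), h q := by
    intro α
    have e : ∀ x : ℝ, (-x + α) / C + m = (α / C + m) - x / C := fun x => by ring
    simp_rw [e]
    rw [intervalIntegral.integral_comp_sub_div h hC', Complex.real_smul]
    simp only [p]
    push_cast
    congr 2 <;> ring
  simp_rw [h1]
  rw [← Finset.mul_sum, intervalIntegral.sum_integral_adjacent_intervals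
    (fun _ _ => hh.intervalIntegrable _ _)]
  simp only [p]
  congr 2
  · simp
  · field_simp
    ring

/-- The Bloch–Zak transform
`f_α(x,y) = ∑_{m∈ℤ} f((−x+α)/C + m) exp(2πi (y/C)(−x+α+Cm))` is an isometry:
`(1/C) ∑_{α<C} ∫₀¹∫₀¹ conj(f_α) g_α dx dy = ∫_ℝ conj(f) g dq`. -/
theorem bloch_zak_isometry
    (C : ℕ) (hC : 0 < C)
    (f g : ℝ → ℂ) (hf : Continuous f) (hf' : HasCompactSupport f)
    (hg : Continuous g) (hg' : HasCompactSupport g)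
    (F G : ℕ → ℝ → ℝ → ℂ)
    (hF : ∀ (α : ℕ) (x y : ℝ),
      F α x y = ∑' m : ℤ, f ((-x + α) / C + m) *
        Complex.exp (2 * Real.pi * Complex.I * (y / C) * (-x + α + C * m)))
    (hG : ∀ (α : ℕ) (x y : ℝ),
      G α x y = ∑' m : ℤ, g ((-x + α) / C + m) *
        Complex.exp (2 * Real.pi * Complex.I * (y / C) * (-x + α + C * m))) :
    (1 / C : ℂ) * ∑ α ∈ Finset.range C,
        ∫ x in (0 : ℝ)..1, ∫ y in (0 : ℝ)..1, (starRingEnd ℂ) (F α x y) * G α x y =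
      ∫ q : ℝ, (starRingEnd ℂ) (f q) * g q := by
  have hC' : (C : ℂ) ≠ 0 := by exact_mod_cast hC.ne'
  have hC1 : (1 : ℝ) ≤ C := by exact_mod_cast hC
  have hC0 : (0 : ℝ) < C := by linarith
  obtain ⟨S₁, hS₁⟩ := exists_forall_add_int_eq_zero f hf'
  obtain ⟨S₂, hS₂⟩ := exists_forall_add_int_eq_zero g hg'
  set S := S₁ ∪ S₂ with hS
  have hSf : ∀ a : ℝ, |a| ≤ 1 → ∀ m ∉ S, f (a + m) = 0 := fun a ha m hm =>
    hS₁ a ha m fun h => hm (Finset.mem_union_left _ h)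
  have hSg : ∀ a : ℝ, |a| ≤ 1 → ∀ m ∉ S, g (a + m) = 0 := fun a ha m hm =>
    hS₂ a ha m fun h => hm (Finset.mem_union_right _ h)
  set h : ℝ → ℂ := fun q => (starRingEnd ℂ) (f q) * g q with hh
  have hcont : Continuous h := (Complex.continuous_conj.comp hf).mul hg
  have hint : Integrable h := hcont.integrable_of_hasCompactSupport hg'.mul_left
  have inner : ∀ α ∈ Finset.range C,
      ∫ x in (0 : ℝ)..1, ∫ y in (0 : ℝ)..1, (starRingEnd ℂ) (F α x y) * G α x y =
      ∑ m ∈ S, ∫ x in (0 : ℝ)..1, h ((-x + α) / C + m) := by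
    intro α hα
    rw [← intervalIntegral.integral_finsetSum
      (fun m _ => Continuous.intervalIntegrable (by fun_prop) _ _)]
    refine intervalIntegral.integral_congr fun x hx => ?_
    rw [Set.uIcc_of_le zero_le_one] at hx
    have hα' : (α : ℝ) + 1 ≤ C := by exact_mod_cast Finset.mem_range.1 hα
    have hα0 : (0 : ℝ) ≤ α := α.cast_nonneg
    have ha : |(-x + α) / C| ≤ 1 := by
      rw [abs_div, abs_of_pos hC0, div_le_one hC0, abs_le]
      constructor <;> linarith [hx.1, hx.2]
    have := integral_conj_mul_trig C hC (-x + α) S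
      (fun m => f ((-x + α) / C + m)) (fun m => g ((-x + α) / C + m))
    simp only [hh]
    rw [← this]
    refine intervalIntegral.integral_congr fun y _ => ?_
    rw [hF, hG, tsum_eq_sum (s := S) (fun m hm => by rw [hSf _ ha m hm, zero_mul]),
      tsum_eq_sum (s := S) (fun m hm => by rw [hSg _ ha m hm, zero_mul])]
    push_cast
    rfl
  rw [Finset.sum_congr rfl inner, Finset.sum_comm,
    Finset.sum_congr rfl fun m _ => sum_integral_comp C hC h hcont m, ← Finset.mul_sum,
    ← mul_assoc, one_div_mul_cancel hC', one_mul]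
  rw [← (hint.hasSum_intervalIntegral (-1 / C)).tsum_eq, tsum_eq_sum (s := S)]
  · refine Finset.sum_congr rfl fun m _ => ?_
    congr 1
    ring
  · intro m hm
    refine (intervalIntegral.integral_congr (g := fun _ => 0) fun q hq => ?_).trans (by simp)
    rw [Set.uIcc_of_le (by linarith)] at hq
    have h1 : (-1 : ℝ) ≤ -1 / C := by rw [le_div_iff₀ hC0]; linarith
    have h2 : (-1 : ℝ) / C ≤ 0 := by rw [div_le_iff₀ hC0]; linarith
    have := hSf (q - m) (by rw [abs_le]; constructor <;> linarith [hq.1, hq.2]) m hm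
    rw [sub_add_cancel] at this
    simp [hh, this]
end
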